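/- arXiv:2101.12733 — 2 statements merged into one kernel-verified Lean document; each statement's English description precedes it below -/
import Mathlib

section
/- For every two finite trees G and H, the following are equivalent: (1) G is isomorphic to H; (2) for every tree T, the number of homomorphisms from T to G equals the number of homomorphisms from T to H; (3) for every tree T, the number of homomorphisms from G to T equals the number of homomorphisms from H to T. -/
open SimpleGraph

/-!
This is Lovász's cancellation argument, run inside the class of trees. Sort the homomorphisms
`T → G` by their kernels. Those with kernel `s` are the copies of the quotient graph `T / s` in `G`,
and if `G` is acyclic and `T` is a tree, then a quotient of `T` having a copy in `G` is again a
tree, with fewer vertices than `T` unless `s` is trivial. By induction on the size of `T`, the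
homomorphism counts from trees determine the numbers of copies of trees in `G`. Sorting the
homomorphisms `G → T` by their ranges instead, the homomorphism counts into trees determine the
numbers of surjective homomorphisms from a connected `G` onto trees. Testing with `T = G` gives a
homomorphism between `G` and `H` which is bijective because the one-vertex tree counts vertices (or
because there is also a surjection the other way), and a bijective homomorphism from a connected
graph to an acyclic one is an isomorphism. Finally, the one-edge tree counts proper 2-colorings and
so detects whether a forest is connected.
-/

variable {U V W : Type*} {T : SimpleGraph U} {G : SimpleGraph V} {H : SimpleGraph W}

theorem card_fiber_eq_of_forall_ne {α β ι : Type*} [Finite α] [Finite β] {a : α → ι} {b : β → ι}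
    (i₀ : ι) (hcard : Nat.card α = Nat.card β)
    (h : ∀ i ≠ i₀, Nat.card {x // a x = i} = Nat.card {y // b y = i}) :
    Nat.card {x // a x = i₀} = Nat.card {y // b y = i₀} := by
  classical
  have e (i : {i // i ≠ i₀}) : {x // a x = i} ≃ {y // b y = i} :=
    (Finite.card_eq.mp (h i i.2)).some
  have hcompl : Nat.card {x // ¬a x = i₀} = Nat.card {y // ¬b y = i₀} :=
    Nat.card_congr <| (Equiv.sigmaSubtypeFiberEquivSubtype a fun _ ↦ Iff.rfl).symm.trans <|
      (Equiv.sigmaCongrRight e).trans (Equiv.sigmaSubtypeFiberEquivSubtype b fun _ ↦ Iff.rfl)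
  rw [← Nat.card_congr (Equiv.sumCompl fun x ↦ a x = i₀), Nat.card_sum,
    ← Nat.card_congr (Equiv.sumCompl fun y ↦ b y = i₀), Nat.card_sum, hcompl] at hcard
  exact Nat.add_right_cancel hcard

theorem nonempty_iso_of_bijective_hom (hG : G.Connected) (hH : H.IsAcyclic) (f : G →g H)
    (hf : Function.Bijective f) : Nonempty (G ≃g H) := by
  let e := Iso.comap (Equiv.ofBijective f hf) H
  have hle : G ≤ H.comap f := fun _ _ ↦ f.map_adj
  have htree : (H.comap f).IsTree := ⟨hG.mono hle, e.isAcyclic_iff.mpr hH⟩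
  have heq : G = H.comap f :=
    hle.antisymm ((isTree_iff_minimal_connected.mp htree).le_of_le hG hle)
  exact ⟨heq ▸ e⟩

/-- `G` and `H` admit equally many homomorphisms from every finite tree. Every finite tree is
represented up to isomorphism by one on some `Fin k`, which avoids fixing a universe. -/
def EqHomCountsFromTrees (G : SimpleGraph V) (H : SimpleGraph W) : Prop :=
  ∀ (k : ℕ) (T : SimpleGraph (Fin k)), T.IsTree → Nat.card (T →g G) = Nat.card (T →g H)

/-- `G` and `H` admit equally many homomorphisms into every finite tree, with the trees represented
as in `EqHomCountsFromTrees`. -/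
def EqHomCountsIntoTrees (G : SimpleGraph V) (H : SimpleGraph W) : Prop :=
  ∀ (k : ℕ) (T : SimpleGraph (Fin k)), T.IsTree → Nat.card (G →g T) = Nat.card (H →g T)

theorem eqHomCountsFromTrees_of_iso (e : G ≃g H) : EqHomCountsFromTrees G H :=
  fun _ _ _ ↦ Nat.card_congr (Iso.refl.homCongr e)

theorem eqHomCountsIntoTrees_of_iso (e : G ≃g H) : EqHomCountsIntoTrees G H :=
  fun _ _ _ ↦ Nat.card_congr (e.homCongr Iso.refl)

/-- The projection of `T` onto its quotient graph `T.map (Quotient.mk s)`. It is a homomorphism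
when no edge of `T` is contracted, as `SimpleGraph.map` discards loops. -/
def homToQuotient {s : Setoid U} (hs : ∀ u v, T.Adj u v → ¬s u v) :
    T →g T.map (Quotient.mk s) :=
  ⟨Quotient.mk s, fun huv ↦ map_adj_apply' huv fun he ↦ hs _ _ huv (Quotient.exact he)⟩

/-- Homomorphisms with kernel `s` correspond to injective homomorphisms from the quotient graph
`T.map (Quotient.mk s)`. -/
def homWithKerEquivInjective (G : SimpleGraph V) {s : Setoid U}
    (hs : ∀ u v, T.Adj u v → ¬s u v) :
    {f : T →g G // Setoid.ker f = s} ≃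
      {g : T.map (Quotient.mk s) →g G // Function.Injective g} where
  toFun f :=
    ⟨{ toFun := Quotient.lift f.1 fun _ _ h ↦ f.2.ge h
       map_rel' := by
        rintro _ _ ⟨-, u, v, huv, rfl, rfl⟩
        exact f.1.map_adj huv },
      by
        rintro ⟨u⟩ ⟨v⟩ h
        exact Quotient.sound (f.2.le h)⟩
  invFun g :=
    ⟨g.1.comp (homToQuotient hs), Setoid.ext fun _ _ ↦ g.2.eq_iff.trans Quotient.eq⟩
  left_inv _ := rfl
  right_inv _ := by
    ext ⟨u⟩
    rfl

theorem card_quotient_lt_card [Finite U] {s : Setoid U} (hs : s ≠ ⊥) :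
    Nat.card (Quotient s) < Nat.card U := by
  refine (Nat.card_le_card_of_surjective _ Quotient.mk_surjective).lt_of_ne fun hcard ↦ hs ?_
  have hbij := (Nat.bijective_iff_surjective_and_card _).mpr ⟨Quotient.mk_surjective, hcard.symm⟩
  exact eq_bot_iff.mpr fun u v huv ↦ hbij.injective (Quotient.sound huv)

/-- Homomorphisms with range `S` are surjective homomorphisms onto the subgraph induced by `S`. -/
def homWithRangeEquivSurjective (G : SimpleGraph V) (T : SimpleGraph U) (S : Set U) :
    {f : G →g T // Set.range f = S} ≃ {g : G →g T.induce S // Function.Surjective g} where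
  toFun f :=
    ⟨⟨fun v ↦ ⟨f.1 v, f.2.le ⟨v, rfl⟩⟩, f.1.map_adj⟩, fun ⟨u, hu⟩ ↦
      let ⟨v, hv⟩ := f.2.ge hu
      ⟨v, Subtype.ext hv⟩⟩
  invFun g :=
    ⟨(Embedding.induce S).toHom.comp g.1, by
      exact (g.2.range_comp Subtype.val).trans Subtype.range_coe⟩
  left_inv _ := rfl
  right_inv _ := rfl

theorem card_hom_bot_unit (G : SimpleGraph V) :
    Nat.card ((⊥ : SimpleGraph Unit) →g G) = Nat.card V :=
  Nat.card_congr
    { toFun := fun f ↦ f ()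
      invFun := fun v ↦ ⟨fun _ ↦ v, False.elim⟩
      left_inv := fun _ ↦ rfl
      right_inv := fun _ ↦ rfl }

theorem coloring_bool_apply_eq_not (hG : G.Connected) {c d : G.Coloring Bool} (hdc : d ≠ c)
    (v : V) : d v = !c v := by
  obtain ⟨u, hu⟩ := DFunLike.ne_iff.mp hdc
  obtain ⟨p⟩ := hG.preconnected u v
  have hparity : (c u ↔ c v) ↔ (d u ↔ d v) :=
    (c.even_length_iff_congr p).symm.trans (d.even_length_iff_congr p)
  grind

theorem card_coloring_bool_eq_two_iff_connected (hG : G.IsBipartite) :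
    Nat.card (G.Coloring Bool) = 2 ↔ G.Connected := by
  classical
  obtain ⟨c⟩ := hG
  replace c : G.Coloring Bool := G.recolorOfEquiv finTwoEquiv c
  let flipAll : G.Coloring Bool := Coloring.mk (fun v ↦ !c v) fun h ↦ by simpa using c.valid h
  have flipAll_apply (v : V) : flipAll v = !c v := rfl
  rw [Nat.card_eq_two_iff' c]
  constructor
  · rintro ⟨d, hdc, hunique⟩
    obtain ⟨u, -⟩ := DFunLike.ne_iff.mp hdc
    refine { preconnected := fun u v ↦ by_contra fun huv ↦ ?_, nonempty := ⟨u⟩ }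
    -- Flipping `c` on the component of `u` only would give a third coloring.
    let flipPart : G.Coloring Bool :=
      Coloring.mk (fun w ↦ if G.Reachable u w then !c w else c w) fun {w x} h ↦ by
        have hreach : G.Reachable u w ↔ G.Reachable u x :=
          ⟨fun hw ↦ hw.trans h.reachable, fun hx ↦ hx.trans h.symm.reachable⟩
        have hne : c w ≠ c x := c.valid h
        grind
    have flipPart_apply (w : V) : flipPart w = if G.Reachable u w then !c w else c w := rfl
    have hflipAll : flipAll = d := hunique _ (DFunLike.ne_iff.mpr ⟨u, by simp [flipAll_apply]⟩)
    have hflipPart : flipPart = d := hunique _ (DFunLike.ne_iff.mpr ⟨u, by simp [flipPart_apply]⟩)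
    simpa [flipAll_apply, flipPart_apply, huv] using
      DFunLike.congr_fun (hflipAll.trans hflipPart.symm) v
  · intro hconn
    obtain ⟨u⟩ := hconn.nonempty
    exact ⟨flipAll, DFunLike.ne_iff.mpr ⟨u, by simp [flipAll_apply]⟩, fun d hdc ↦
      DFunLike.ext _ _ (coloring_bool_apply_eq_not hconn hdc)⟩

namespace EqHomCountsFromTrees

theorem card_hom_eq (h : EqHomCountsFromTrees G H) [Finite U] (hT : T.IsTree) :
    Nat.card (T →g G) = Nat.card (T →g H) := by
  have := Fintype.ofFinite U
  let e := T.overFinIso rfl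
  rw [Nat.card_congr (e.homCongr Iso.refl), h _ _ (e.isTree_iff.mp hT),
    Nat.card_congr (e.homCongr Iso.refl)]

theorem card_verts_eq (h : EqHomCountsFromTrees G H) : Nat.card V = Nat.card W := by
  simpa only [card_hom_bot_unit] using h.card_hom_eq (T := (⊥ : SimpleGraph Unit)) .of_subsingleton

theorem card_injective_hom_eq [Finite V] [Finite W] (h : EqHomCountsFromTrees G H)
    (hG : G.IsAcyclic) (hH : H.IsAcyclic) [Finite U] (hT : T.IsTree) :
    Nat.card {f : T →g G // Function.Injective f} =
      Nat.card {f : T →g H // Function.Injective f} := by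
  induction hn : Nat.card U using Nat.strong_induction_on generalizing U with
  | _ n ih =>
  subst hn
  simp only [← Setoid.ker_eq_bot_iff]
  refine card_fiber_eq_of_forall_ne ⊥ (h.card_hom_eq hT) fun s hs ↦ ?_
  by_cases hadj : ∀ u v, T.Adj u v → ¬s u v
  · rw [Nat.card_congr (homWithKerEquivInjective G hadj),
      Nat.card_congr (homWithKerEquivInjective H hadj)]
    by_cases hacyc : (T.map (Quotient.mk s)).IsAcyclic
    · have hconn : (T.map (Quotient.mk s)).Connected :=
        hT.connected.map (homToQuotient hadj) Quotient.mk_surjective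
      exact ih _ (card_quotient_lt_card hs) ⟨hconn, hacyc⟩ rfl
    · have : IsEmpty {g : T.map (Quotient.mk s) →g G // Function.Injective g} :=
        ⟨fun g ↦ hacyc (hG.comap g.1 g.2)⟩
      have : IsEmpty {g : T.map (Quotient.mk s) →g H // Function.Injective g} :=
        ⟨fun g ↦ hacyc (hH.comap g.1 g.2)⟩
      rw [Nat.card_of_isEmpty, Nat.card_of_isEmpty]
  · push Not at hadj
    obtain ⟨u, v, huv, hsuv⟩ := hadj
    have : IsEmpty {f : T →g G // Setoid.ker f = s} :=
      ⟨fun f ↦ (f.1.map_adj huv).ne (f.2.ge hsuv)⟩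
    have : IsEmpty {f : T →g H // Setoid.ker f = s} :=
      ⟨fun f ↦ (f.1.map_adj huv).ne (f.2.ge hsuv)⟩
    rw [Nat.card_of_isEmpty, Nat.card_of_isEmpty]

theorem nonempty_iso [Finite V] [Finite W] (h : EqHomCountsFromTrees G H) (hG : G.IsTree)
    (hH : H.IsAcyclic) : Nonempty (G ≃g H) := by
  have : Nonempty {f : G →g G // Function.Injective f} := ⟨Hom.id, Function.injective_id⟩
  have hpos : 0 < Nat.card {f : G →g H // Function.Injective f} :=
    h.card_injective_hom_eq hG.isAcyclic hH hG ▸ Nat.card_pos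
  obtain ⟨f, hf⟩ := (Nat.card_pos_iff.mp hpos).1
  exact nonempty_iso_of_bijective_hom hG.connected hH f
    ((Nat.bijective_iff_injective_and_card f).mpr ⟨hf, h.card_verts_eq⟩)

end EqHomCountsFromTrees

namespace EqHomCountsIntoTrees

theorem symm (h : EqHomCountsIntoTrees G H) : EqHomCountsIntoTrees H G :=
  fun k T hT ↦ (h k T hT).symm

theorem card_hom_eq (h : EqHomCountsIntoTrees G H) [Finite U] (hT : T.IsTree) :
    Nat.card (G →g T) = Nat.card (H →g T) := by
  have := Fintype.ofFinite U
  let e := T.overFinIso rfl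
  rw [Nat.card_congr (Iso.refl.homCongr e), h _ _ (e.isTree_iff.mp hT),
    Nat.card_congr (Iso.refl.homCongr e)]

theorem connected (h : EqHomCountsIntoTrees G H) (hG : G.IsBipartite) (hH : H.IsBipartite)
    (hconn : G.Connected) : H.Connected := by
  have htree : (completeGraph Bool).IsTree := ⟨connected_top, .of_card_le_two (by simp)⟩
  rwa [← card_coloring_bool_eq_two_iff_connected hH, ← h.card_hom_eq htree,
    card_coloring_bool_eq_two_iff_connected hG]

theorem card_surjective_hom_eq [Finite V] [Finite W] (h : EqHomCountsIntoTrees G H)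
    (hG : G.Connected) (hH : H.Connected) [Finite U] (hT : T.IsTree) :
    Nat.card {f : G →g T // Function.Surjective f} =
      Nat.card {f : H →g T // Function.Surjective f} := by
  induction hn : Nat.card U using Nat.strong_induction_on generalizing U with
  | _ n ih =>
  subst hn
  simp only [← Set.range_eq_univ]
  refine card_fiber_eq_of_forall_ne Set.univ (h.card_hom_eq hT) fun S hS ↦ ?_
  rw [Nat.card_congr (homWithRangeEquivSurjective G T S),
    Nat.card_congr (homWithRangeEquivSurjective H T S)]
  by_cases hconn : (T.induce S).Connected
  · obtain ⟨u, hu⟩ := (Set.ne_univ_iff_exists_notMem S).mp hS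
    exact ih _ (Finite.card_subtype_lt hu) ⟨hconn, hT.isAcyclic.induce S⟩ rfl
  · have : IsEmpty {g : G →g T.induce S // Function.Surjective g} :=
      ⟨fun g ↦ hconn (hG.map g.1 g.2)⟩
    have : IsEmpty {g : H →g T.induce S // Function.Surjective g} :=
      ⟨fun g ↦ hconn (hH.map g.1 g.2)⟩
    rw [Nat.card_of_isEmpty, Nat.card_of_isEmpty]

theorem exists_surjective_hom [Finite V] [Finite W] (h : EqHomCountsIntoTrees G H)
    (hG : G.IsTree) (hH : H.Connected) : ∃ f : H →g G, Function.Surjective f := by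
  have : Nonempty {f : G →g G // Function.Surjective f} := ⟨Hom.id, Function.surjective_id⟩
  have hpos : 0 < Nat.card {f : H →g G // Function.Surjective f} :=
    h.card_surjective_hom_eq hG.connected hH hG ▸ Nat.card_pos
  exact nonempty_subtype.mp (Nat.card_pos_iff.mp hpos).1

theorem nonempty_iso [Finite V] [Finite W] (h : EqHomCountsIntoTrees G H) (hG : G.IsTree)
    (hH : H.IsAcyclic) : Nonempty (G ≃g H) := by
  have hconn := h.connected hG.isBipartite hH.isBipartite hG.connected
  obtain ⟨f, hf⟩ := h.exists_surjective_hom hG hconn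
  obtain ⟨g, hg⟩ := h.symm.exists_surjective_hom ⟨hconn, hH⟩ hG.connected
  have hcard : Nat.card V = Nat.card W :=
    (Nat.card_le_card_of_surjective f hf).antisymm (Nat.card_le_card_of_surjective g hg)
  exact nonempty_iso_of_bijective_hom hG.connected hH g
    ((Nat.bijective_iff_surjective_and_card g).mpr ⟨hg, hcard⟩)

end EqHomCountsIntoTrees

theorem tree_iso_iff_hom_counts_over_trees_general [Finite V] [Finite W]
    (G : SimpleGraph V) (H : SimpleGraph W) (hG : G.IsTree) (hH : H.IsAcyclic) :
    (Nonempty (G ≃g H) ↔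
      ∀ (k : ℕ) (T : SimpleGraph (Fin k)), T.IsTree →
        Nat.card (T →g G) = Nat.card (T →g H)) ∧
    (Nonempty (G ≃g H) ↔
      ∀ (k : ℕ) (T : SimpleGraph (Fin k)), T.IsTree →
        Nat.card (G →g T) = Nat.card (H →g T)) :=
  ⟨⟨fun ⟨e⟩ ↦ eqHomCountsFromTrees_of_iso e,
      fun h ↦ EqHomCountsFromTrees.nonempty_iso h hG hH⟩,
    ⟨fun ⟨e⟩ ↦ eqHomCountsIntoTrees_of_iso e,
      fun h ↦ EqHomCountsIntoTrees.nonempty_iso h hG hH⟩⟩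

/-- For finite trees `G` and `H`, isomorphism of `G` and `H` is equivalent to equality of their
left-homomorphism counts from every tree, and also to equality of their right-homomorphism counts
into every tree. -/
theorem tree_iso_iff_hom_counts_over_trees {p q : ℕ}
    (G : SimpleGraph (Fin p)) (H : SimpleGraph (Fin q)) (hG : G.IsTree) (hH : H.IsTree) :
    (Nonempty (G ≃g H) ↔
      ∀ (k : ℕ) (T : SimpleGraph (Fin k)), T.IsTree →
        Nat.card (T →g G) = Nat.card (T →g H)) ∧
    (Nonempty (G ≃g H) ↔
      ∀ (k : ℕ) (T : SimpleGraph (Fin k)), T.IsTree →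
        Nat.card (G →g T) = Nat.card (H →g T)) :=
  tree_iso_iff_hom_counts_over_trees_general G H hG hH.isAcyclic
end

section
/- There is no class 𝓕 of finite simple graphs (closed under isomorphism) such that for every two graphs G and H: G and H are cospectral if and only if for every graph F ∈ 𝓕, the number of homomorphisms from G to F equals the number of homomorphisms from H to F. -/
open SimpleGraph

open Classical in
/-- The rational adjacency matrix of a simple graph. -/
noncomputable def adjMatQ {V : Type*} (G : SimpleGraph V) : Matrix V V ℚ :=
  Matrix.of fun i j => if G.Adj i j then 1 else 0

/-- Two finite simple graphs are cospectral if their adjacency matrices have the same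
characteristic polynomial.  (Graphs with different numbers of vertices have characteristic
polynomials of different degrees, hence are not cospectral.) -/
noncomputable def Cospectral {m n : ℕ} (G : SimpleGraph (Fin m)) (H : SimpleGraph (Fin n)) :
    Prop :=
  (adjMatQ G).charpoly = (adjMatQ H).charpoly

/-!
The star `K_{1,pq}` and the graph `K_{p,q}` padded with `pq + 1 - p - q` isolated vertices are
cospectral, since both adjacency matrices have rank two with nonzero eigenvalues `±√(pq)`. Take
`p = 2` and `q = c + 1`, so that there are `c` isolated vertices, and let `F` have `n` vertices and
maximum degree `d > 0`. The star has at most `n * d ^ (2 * (c + 1))` homomorphisms to `F`, the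
padded graph at least `d ^ (c + 1) * n ^ c`. Since `d < n`, a large `c` tells the two graphs apart.
Counting homomorphisms into `F` is therefore a cospectral invariant only if `F` has no edges, and
edgeless graphs cannot distinguish `K₂` from `K₃`.
-/

section CharacteristicPolynomial

open Polynomial

variable {α β γ V W : Type*}

theorem adjMatQ_apply_congr {G : SimpleGraph V} {H : SimpleGraph W} {x y : V} {u v : W}
    (h : G.Adj x y ↔ H.Adj u v) : adjMatQ G x y = adjMatQ H u v := by
  classical exact if_congr h rfl rfl

theorem charpoly_adjMatQ_eq_of_iso [Fintype V] [DecidableEq V] [Fintype W] [DecidableEq W]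
    {G : SimpleGraph V} {H : SimpleGraph W} (e : G ≃g H) :
    (adjMatQ G).charpoly = (adjMatQ H).charpoly := by
  have hreindex : (adjMatQ G).reindex e.toEquiv e.toEquiv = adjMatQ H := by
    ext x y
    exact adjMatQ_apply_congr e.symm.map_adj_iff
  rw [← hreindex, Matrix.charpoly_reindex]

theorem Cospectral.card_eq {m n : ℕ} {G : SimpleGraph (Fin m)} {H : SimpleGraph (Fin n)}
    (h : Cospectral G H) : m = n := by
  simpa only [Matrix.charpoly_natDegree_eq_dim, Fintype.card_fin] using congrArg natDegree h

theorem adjMatQ_sum (G : SimpleGraph V) (H : SimpleGraph W) :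
    adjMatQ (G ⊕g H) = Matrix.fromBlocks (adjMatQ G) 0 0 (adjMatQ H) := by
  ext (x | x) (y | y)
  · exact adjMatQ_apply_congr sum_adj_inl
  · simp [adjMatQ]
  · simp [adjMatQ]
  · exact adjMatQ_apply_congr sum_adj_inr

theorem adjMatQ_bot : adjMatQ (⊥ : SimpleGraph V) = 0 := by
  ext x y
  simp [adjMatQ]

theorem X_sq_mul_charpoly_adjMatQ_completeBipartiteGraph [Fintype α] [DecidableEq α] [Fintype β]
    [DecidableEq β] :
    (X : ℚ[X]) ^ 2 * (adjMatQ (completeBipartiteGraph α β)).charpoly =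
      X ^ (Fintype.card α + Fintype.card β) *
        (X ^ 2 - C ((Fintype.card α * Fintype.card β : ℕ) : ℚ)) := by
  let U : Matrix (α ⊕ β) (Fin 2) ℚ := Matrix.of (Sum.elim (fun _ ↦ ![1, 0]) (fun _ ↦ ![0, 1]))
  let T : Matrix (Fin 2) (α ⊕ β) ℚ := Matrix.of ![Sum.elim 0 1, Sum.elim 1 0]
  have hUT : adjMatQ (completeBipartiteGraph α β) = U * T := by
    ext (x | x) (y | y) <;> simp [adjMatQ, U, T, Matrix.mul_apply, Fin.sum_univ_two]
  have hTU : T * U = !![0, (Fintype.card β : ℚ); (Fintype.card α : ℚ), 0] := by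
    ext i j
    fin_cases i <;> fin_cases j <;> simp [T, U, Matrix.mul_apply]
  have hcharpoly : (T * U).charpoly = X ^ 2 - C ((Fintype.card α * Fintype.card β : ℕ) : ℚ) := by
    simp [hTU, Matrix.charpoly_fin_two, Matrix.trace_fin_two, Matrix.det_fin_two, mul_comm,
      sub_eq_add_neg]
  simpa only [← hUT, hcharpoly, Fintype.card_fin, Fintype.card_sum]
    using Matrix.charpoly_mul_comm' U T

theorem charpoly_adjMatQ_sum_bot [Fintype V] [DecidableEq V] [Fintype γ] [DecidableEq γ]
    (G : SimpleGraph V) :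
    (adjMatQ (G ⊕g (⊥ : SimpleGraph γ))).charpoly =
      (adjMatQ G).charpoly * X ^ Fintype.card γ := by
  rw [adjMatQ_sum, Matrix.charpoly_fromBlocks_zero₂₁, adjMatQ_bot, Matrix.charpoly_zero]

theorem charpoly_adjMatQ_completeBipartiteGraph_eq_sum_bot {α' β' : Type*}
    [Fintype α] [DecidableEq α] [Fintype β] [DecidableEq β] [Fintype γ] [DecidableEq γ]
    [Fintype α'] [DecidableEq α'] [Fintype β'] [DecidableEq β']
    (hmul : Fintype.card α' * Fintype.card β' = Fintype.card α * Fintype.card β)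
    (hadd : Fintype.card α' + Fintype.card β' =
      Fintype.card α + Fintype.card β + Fintype.card γ) :
    (adjMatQ (completeBipartiteGraph α' β')).charpoly =
      (adjMatQ (completeBipartiteGraph α β ⊕g (⊥ : SimpleGraph γ))).charpoly := by
  apply mul_left_cancel₀ (pow_ne_zero 2 X_ne_zero)
  rw [charpoly_adjMatQ_sum_bot, ← mul_assoc, X_sq_mul_charpoly_adjMatQ_completeBipartiteGraph,
    X_sq_mul_charpoly_adjMatQ_completeBipartiteGraph, hmul, hadd]
  ring

end CharacteristicPolynomial

section HomomorphismCounts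

variable {α β V V' W : Type*}

/-- A homomorphism from a complete bipartite graph places the left side anywhere and the right side
in the common neighbourhood of the image of the left side. -/
def completeBipartiteGraphHomEquiv (F : SimpleGraph W) :
    (completeBipartiteGraph α β →g F) ≃
      Σ f : α → W, β → (⋂ a, F.neighborSet (f a) : Set W) where
  toFun φ := ⟨φ ∘ Sum.inl, fun b ↦ ⟨φ (Sum.inr b),
    Set.mem_iInter.2 fun a ↦ φ.map_adj (by simp)⟩⟩
  invFun p :=
    { toFun := Sum.elim p.1 fun b ↦ p.2 b
      map_rel' := by
        have hadj (a : α) (b : β) : F.Adj (p.1 a) (p.2 b) := Set.mem_iInter.1 (p.2 b).2 a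
        rintro (a | b) (a' | b') <;> simp [hadj, (hadj _ _).symm] }
  left_inv φ := by
    ext (a | b) <;> rfl
  right_inv _ := rfl

/-- A homomorphism from a disjoint sum is a pair of homomorphisms from the summands. -/
def sumHomEquiv (G : SimpleGraph V) (H : SimpleGraph V') (F : SimpleGraph W) :
    (G ⊕g H →g F) ≃ (G →g F) × (H →g F) where
  toFun φ := (φ.comp Embedding.sumInl.toHom, φ.comp Embedding.sumInr.toHom)
  invFun p :=
    { toFun := Sum.elim p.1 p.2
      map_rel' := by
        rintro (x | x) (y | y) h
        · exact p.1.map_adj (sum_adj_inl.1 h)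
        · simp at h
        · simp at h
        · exact p.2.map_adj (sum_adj_inr.1 h) }
  left_inv φ := by
    ext (x | x) <;> rfl
  right_inv _ := rfl

/-- Every map of vertices is a homomorphism from an edgeless graph. -/
def botHomEquiv (V : Type*) (F : SimpleGraph W) : ((⊥ : SimpleGraph V) →g F) ≃ (V → W) where
  toFun φ := φ
  invFun f := ⟨f, False.elim⟩
  left_inv _ := rfl
  right_inv _ := rfl

theorem card_completeBipartiteGraph_hom [Fintype α] [DecidableEq α] [Finite β] [Fintype W]
    (F : SimpleGraph W) :
    Nat.card (completeBipartiteGraph α β →g F) =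
      ∑ f : α → W, (⋂ a, F.neighborSet (f a)).ncard ^ Nat.card β := by
  simp only [Nat.card_congr (completeBipartiteGraphHomEquiv F), Nat.card_sigma, Nat.card_fun,
    Nat.card_coe_set_eq]

theorem card_star_hom [Unique α] [Finite β] [Fintype W] (F : SimpleGraph W) :
    Nat.card (completeBipartiteGraph α β →g F) =
      ∑ w, (F.neighborSet w).ncard ^ Nat.card β := by
  classical
  rw [card_completeBipartiteGraph_hom]
  exact Fintype.sum_equiv (Equiv.funUnique α W) _ _ fun f ↦
    congrArg (fun s : Set W ↦ s.ncard ^ Nat.card β) (iInf_unique fun a ↦ F.neighborSet (f a))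

theorem ncard_neighborSet_pow_le_card_completeBipartiteGraph_hom [Finite α] [Nonempty α] [Finite β]
    [Finite W] (F : SimpleGraph W) (w : W) :
    (F.neighborSet w).ncard ^ Nat.card β ≤ Nat.card (completeBipartiteGraph α β →g F) := by
  classical
  have := Fintype.ofFinite α
  have := Fintype.ofFinite W
  rw [card_completeBipartiteGraph_hom]
  simpa only [Set.iInter_const] using
    Finset.single_le_sum (f := fun f : α → W ↦ (⋂ a, F.neighborSet (f a)).ncard ^ Nat.card β)
      (fun _ _ ↦ Nat.zero_le _) (Finset.mem_univ fun _ ↦ w)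

theorem card_sum_bot_hom [Finite V'] (G : SimpleGraph V) (F : SimpleGraph W) :
    Nat.card (G ⊕g (⊥ : SimpleGraph V') →g F) =
      Nat.card (G →g F) * Nat.card W ^ Nat.card V' := by
  rw [Nat.card_congr (sumHomEquiv G ⊥ F), Nat.card_prod, Nat.card_congr (botHomEquiv V' F),
    Nat.card_fun]

theorem card_hom_bot_eq_zero {G : SimpleGraph V} (hG : G ≠ ⊥) :
    Nat.card (G →g (⊥ : SimpleGraph W)) = 0 := by
  obtain ⟨x, y, hxy⟩ := ne_bot_iff_exists_adj.1 hG
  have : IsEmpty (G →g (⊥ : SimpleGraph W)) := ⟨fun φ ↦ φ.map_adj hxy⟩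
  exact Nat.card_of_isEmpty

end HomomorphismCounts

theorem exists_mul_pow_lt_pow (k : ℕ) {d n : ℕ} (h : d < n) : ∃ c : ℕ, k * d ^ c < n ^ c := by
  have hn : (0 : ℚ) < n := by exact_mod_cast d.zero_le.trans_lt h
  have hratio : (d / n : ℚ) < 1 := (div_lt_one hn).2 (by exact_mod_cast h)
  obtain ⟨c, hc⟩ := exists_pow_lt_of_lt_one (show (0 : ℚ) < 1 / (k + 1) by positivity) hratio
  rw [div_pow, div_lt_div_iff₀ (by positivity) (by positivity), one_mul] at hc
  have hc' : d ^ c * (k + 1) < n ^ c := by exact_mod_cast hc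
  exact ⟨c, by linarith [(d ^ c).zero_le]⟩

section CospectralInvariance

variable {W : Type*} {F : SimpleGraph W}

theorem exists_neighborSet_ncard_maximal [Finite W] (hF : F ≠ ⊥) :
    ∃ w, (∀ v, (F.neighborSet v).ncard ≤ (F.neighborSet w).ncard) ∧
      0 < (F.neighborSet w).ncard ∧ (F.neighborSet w).ncard < Nat.card W := by
  obtain ⟨x, y, hxy⟩ := ne_bot_iff_exists_adj.1 hF
  have : Nonempty W := ⟨x⟩
  obtain ⟨w, hmax⟩ := Finite.exists_max fun v ↦ (F.neighborSet v).ncard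
  refine ⟨w, hmax, ?_, ?_⟩
  · exact ((Set.ncard_pos).2 ⟨y, hxy⟩).trans_le (hmax x)
  · exact Set.ncard_lt_card ((Set.ne_univ_iff_exists_notMem _).2 ⟨w, F.irrefl⟩)

theorem exists_card_star_hom_lt [Finite W] (hF : F ≠ ⊥) :
    ∃ c : ℕ, Nat.card (completeBipartiteGraph Unit (Fin (2 * (c + 1))) →g F) <
      Nat.card
        (completeBipartiteGraph (Fin 2) (Fin (c + 1)) ⊕g (⊥ : SimpleGraph (Fin c)) →g F) := by
  have := Fintype.ofFinite W
  obtain ⟨w, hmax, hpos, hlt⟩ := exists_neighborSet_ncard_maximal hF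
  set d := (F.neighborSet w).ncard
  obtain ⟨c, hc⟩ := exists_mul_pow_lt_pow (Nat.card W * d) hlt
  refine ⟨c, ?_⟩
  calc Nat.card (completeBipartiteGraph Unit (Fin (2 * (c + 1))) →g F)
      = ∑ v, (F.neighborSet v).ncard ^ (2 * (c + 1)) := by rw [card_star_hom, Nat.card_fin]
    _ ≤ ∑ _v : W, d ^ (2 * (c + 1)) := by gcongr with v; exact hmax v
    _ = d ^ (c + 1) * (Nat.card W * d * d ^ c) := by
      rw [Finset.sum_const, Finset.card_univ, ← Nat.card_eq_fintype_card, smul_eq_mul]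
      ring
    _ < d ^ (c + 1) * Nat.card W ^ c := by gcongr
    _ ≤ Nat.card (completeBipartiteGraph (Fin 2) (Fin (c + 1)) →g F) * Nat.card W ^ c := by
      gcongr
      simpa only [Nat.card_fin] using
        ncard_neighborSet_pow_le_card_completeBipartiteGraph_hom (α := Fin 2) (β := Fin (c + 1)) F w
    _ = _ := by rw [card_sum_bot_hom, Nat.card_fin]

theorem card_hom_eq_of_charpoly_eq
    (hF : ∀ (m n : ℕ) (G : SimpleGraph (Fin m)) (H : SimpleGraph (Fin n)),
      Cospectral G H → Nat.card (G →g F) = Nat.card (H →g F))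
    {U V : Type*} [Fintype U] [DecidableEq U] [Fintype V] [DecidableEq V]
    {G : SimpleGraph U} {H : SimpleGraph V} (h : (adjMatQ G).charpoly = (adjMatQ H).charpoly) :
    Nat.card (G →g F) = Nat.card (H →g F) := by
  let eG := G.overFinIso rfl
  let eH := H.overFinIso rfl
  have hcospectral : Cospectral (G.overFin rfl) (H.overFin rfl) := by
    rw [Cospectral, ← charpoly_adjMatQ_eq_of_iso eG, h, charpoly_adjMatQ_eq_of_iso eH]
  calc Nat.card (G →g F) = Nat.card (G.overFin rfl →g F) := Nat.card_congr (eG.homCongr .refl)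
    _ = Nat.card (H.overFin rfl →g F) := hF _ _ _ _ hcospectral
    _ = Nat.card (H →g F) := Nat.card_congr (eH.symm.homCongr .refl)

theorem eq_bot_of_forall_cospectral_card_hom_eq [Finite W]
    (hF : ∀ (m n : ℕ) (G : SimpleGraph (Fin m)) (H : SimpleGraph (Fin n)),
      Cospectral G H → Nat.card (G →g F) = Nat.card (H →g F)) :
    F = ⊥ := by
  by_contra hbot
  obtain ⟨c, hc⟩ := exists_card_star_hom_lt hbot
  refine hc.ne (card_hom_eq_of_charpoly_eq hF ?_)
  apply charpoly_adjMatQ_completeBipartiteGraph_eq_sum_bot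
  · simp
  · simp only [Fintype.card_unit, Fintype.card_fin]
    ring

end CospectralInvariance

theorem no_class_captures_cospectrality_general {ι : Sort*} {W : ι → Type*} [∀ i, Finite (W i)]
    (F : ∀ i, SimpleGraph (W i)) :
    ¬ ∀ (m n : ℕ) (G : SimpleGraph (Fin m)) (H : SimpleGraph (Fin n)),
      Cospectral G H ↔ ∀ i, Nat.card (G →g F i) = Nat.card (H →g F i) := by
  intro h
  have hbot (i) : F i = ⊥ :=
    eq_bot_of_forall_cospectral_card_hom_eq fun m n G H hGH ↦ (h m n G H).1 hGH i
  have hcospectral : Cospectral (⊤ : SimpleGraph (Fin 2)) (⊤ : SimpleGraph (Fin 3)) :=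
    (h _ _ _ _).2 fun i ↦ by
      rw [hbot i, card_hom_bot_eq_zero top_ne_bot, card_hom_bot_eq_zero top_ne_bot]
  exact absurd hcospectral.card_eq (by decide)

/-- There is no class `𝓕` of finite simple graphs (non-empty, closed under isomorphism) such that
two graphs are cospectral exactly when their right-homomorphism counts into every member of `𝓕`
agree. -/
theorem no_class_captures_cospectrality :
    ¬ ∃ 𝓕 : ∀ n : ℕ, Set (SimpleGraph (Fin n)),
      (∃ (n : ℕ) (G : SimpleGraph (Fin n)), G ∈ 𝓕 n) ∧
      (∀ (m n : ℕ) (G : SimpleGraph (Fin m)) (H : SimpleGraph (Fin n)),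
        G ∈ 𝓕 m → Nonempty (G ≃g H) → H ∈ 𝓕 n) ∧
      (∀ (m n : ℕ) (G : SimpleGraph (Fin m)) (H : SimpleGraph (Fin n)),
        Cospectral G H ↔
          ∀ (k : ℕ) (F : SimpleGraph (Fin k)), F ∈ 𝓕 k →
            Nat.card (G →g F) = Nat.card (H →g F)) := by
  rintro ⟨𝓕, -, -, h⟩
  exact no_class_captures_cospectrality_general (fun F : Σ n, 𝓕 n ↦ F.2.1) fun m n G H ↦
    (h m n G H).trans ⟨fun hF F ↦ hF F.1 F.2.1 F.2.2, fun hF k F hFk ↦ hF ⟨k, F, hFk⟩⟩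
end
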